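/- In a directed graph on 4 vertices where each vertex has out-degree at least 2 (each agent dominates at least 2 others), either there exist two vertices both dominating the same pair of other vertices, or there is a vertex dominated by all three others, or the domination relation contains a vertex v₃ that dominates both v₁ and v₂ while v₁ dominates v₃ (the configuration of Figure 3). -/

import Mathlib

/-!
Without an antiparallel pair of arcs, the out- and in-neighbours of a vertex are disjoint and avoid
the vertex, so its out- and in-degree add up to less than `|V|`. The out-degrees and the in-degrees
have the same sum, so some out-degree is less than `|V| / 2`. Hence out-degrees of at least
`|V| / 2`, such as 2 on four vertices, force a pair `v₁`, `v₃` dominating each other, and `v₂` is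
any further vertex dominated by `v₃`.
-/

open Finset

section Domination

variable {V : Type*} [Fintype V] (D : V → V → Prop) [DecidableRel D]

theorem card_out_add_card_in_lt_of_asymm [Std.Asymm D] (u : V) :
    #{v | D u v} + #{v | D v u} < Fintype.card V := by
  classical
  have out_disjoint_in : Disjoint (α := Finset V) {v | D u v} {v | D v u} :=
    disjoint_filter.2 fun _ _ huv hvu ↦ asymm huv hvu
  rw [← card_union_of_disjoint out_disjoint_in]
  refine card_lt_univ_of_notMem (x := u) ?_
  simp [irrefl_of D u]

theorem sum_card_out_eq_sum_card_in : ∑ u, #{v | D u v} = ∑ u, #{v | D v u} :=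
  sum_card_bipartiteAbove_eq_sum_card_bipartiteBelow D

theorem exists_two_mul_card_out_lt_of_asymm [Nonempty V] [Std.Asymm D] :
    ∃ u, 2 * #{v | D u v} < Fintype.card V := by
  have sum_lt : ∑ u, 2 * #{v | D u v} < ∑ _u : V, Fintype.card V :=
    calc ∑ u, 2 * #{v | D u v} = ∑ u, (#{v | D u v} + #{v | D v u}) := by
          rw [← mul_sum, two_mul, sum_add_distrib, ← sum_card_out_eq_sum_card_in]
      _ < ∑ _u : V, Fintype.card V :=
          sum_lt_sum_of_nonempty univ_nonempty fun u _ ↦ card_out_add_card_in_lt_of_asymm D u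
  obtain ⟨u, -, hu⟩ := exists_lt_of_sum_lt sum_lt
  exact ⟨u, hu⟩

variable [DecidableEq V] {D}

theorem one_lt_card_out_iff {u : V} :
    1 < #{v | u ≠ v ∧ D u v} ↔ ∃ v w, v ≠ w ∧ v ≠ u ∧ w ≠ u ∧ D u v ∧ D u w := by
  simp only [one_lt_card, mem_filter_univ]
  grind

theorem exists_ne_and_mutual_of_card_le_two_mul_card_out [Nonempty V]
    (hout : ∀ u, Fintype.card V ≤ 2 * #{v | u ≠ v ∧ D u v}) :
    ∃ u v, u ≠ v ∧ D u v ∧ D v u := by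
  by_contra! no_mutual
  have : Std.Asymm fun u v ↦ u ≠ v ∧ D u v :=
    ⟨fun u v huv hvu ↦ no_mutual u v huv.1 huv.2 hvu.2⟩
  obtain ⟨u, hu⟩ := exists_two_mul_card_out_lt_of_asymm fun u v ↦ u ≠ v ∧ D u v
  exact (hout u).not_gt hu

theorem double_domination_cases_general (hcard : 3 ≤ Fintype.card V)
    (hout : ∀ u, Fintype.card V ≤ 2 * #{v | u ≠ v ∧ D u v}) :
    ∃ v₁ v₂ v₃ : V, v₁ ≠ v₂ ∧ v₁ ≠ v₃ ∧ v₂ ≠ v₃ ∧ D v₃ v₁ ∧ D v₃ v₂ ∧ D v₁ v₃ := by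
  have : Nonempty V := Fintype.card_pos_iff.1 (by lia)
  obtain ⟨v₁, v₃, h₁₃, hD₁₃, hD₃₁⟩ := exists_ne_and_mutual_of_card_le_two_mul_card_out hout
  have one_lt_out : 1 < #{v | v₃ ≠ v ∧ D v₃ v} := by
    have := hout v₃
    lia
  obtain ⟨v₂, hv₂, h₂₁⟩ := exists_mem_ne one_lt_out v₁
  obtain ⟨h₃₂, hD₃₂⟩ := (mem_filter_univ v₂).1 hv₂
  exact ⟨v₁, v₂, v₃, h₂₁.symm, h₁₃, h₃₂.symm, hD₃₁, hD₃₂, hD₁₃⟩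

end Domination

/-- In a directed graph on 4 vertices without self-loops in which every vertex
dominates at least 2 others, either two vertices both dominate the same pair
of other vertices, or some vertex is dominated by all three others, or there
are vertices v₁, v₂, v₃ with v₃ dominating v₁ and v₂ while v₁ dominates v₃. -/
theorem double_domination_cases (D : Fin 4 → Fin 4 → Prop)
    (hirr : ∀ v, ¬ D v v)
    (hout : ∀ u : Fin 4, ∃ v w : Fin 4, v ≠ w ∧ v ≠ u ∧ w ≠ u ∧ D u v ∧ D u w) :
    (∃ u v w x : Fin 4, u ≠ v ∧ w ≠ x ∧ w ≠ u ∧ w ≠ v ∧ x ≠ u ∧ x ≠ v ∧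
      D u w ∧ D u x ∧ D v w ∧ D v x) ∨
    (∃ v : Fin 4, ∀ u : Fin 4, u ≠ v → D u v) ∨
    (∃ v₁ v₂ v₃ : Fin 4, v₁ ≠ v₂ ∧ v₁ ≠ v₃ ∧ v₂ ≠ v₃ ∧
      D v₃ v₁ ∧ D v₃ v₂ ∧ D v₁ v₃) := by
  classical
  have four_le_two_mul_card_out (u : Fin 4) : Fintype.card (Fin 4) ≤ 2 * #{v | u ≠ v ∧ D u v} :=
    Nat.mul_le_mul_left 2 (one_lt_card_out_iff.2 (hout u))
  exact .inr (.inr (double_domination_cases_general (by simp) four_le_two_mul_card_out))
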